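/- Let a_d, a_t ∈ ℝ and k ∈ ℂ. Define the 3×3 complex matrices P = [[1,0,0],[0,1/2,1/2],[0,1/2,1/2]], X(k) = [[e^{ik a_d}, e^{−ik a_d}, 0],[1,1,0],[0,0,(1+e^{k² a_t})/√2]], Y(k) = [[ik e^{ik a_d}, −ik e^{−ik a_d}, 0],[−ik, ik, 0],[0,0,(1−e^{k² a_t})/√2]]. Then det( P·X(k) + (I−P)·Y(k) ) = (i/√2)·[ sin(k a_d)·(1 − e^{k² a_t}) + k·cos(k a_d)·(1 + e^{k² a_t}) ]. -/

import Mathlib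

open Matrix Complex

/-- The projection `P` for the one-diffusion-edge/one-transport-edge example. -/
noncomputable def Pex : Matrix (Fin 3) (Fin 3) ℂ :=
  !![1, 0, 0;
     0, 1/2, 1/2;
     0, 1/2, 1/2]

/-- The matrix `X(k)`. -/
noncomputable def Xex (ad at' : ℝ) (k : ℂ) : Matrix (Fin 3) (Fin 3) ℂ :=
  !![Complex.exp (Complex.I * k * (ad : ℂ)), Complex.exp (-(Complex.I * k * (ad : ℂ))), 0;
     1, 1, 0;
     0, 0, (1 + Complex.exp (k ^ 2 * (at' : ℂ))) / (Real.sqrt 2 : ℂ)]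

/-- The matrix `Y(k)`. -/
noncomputable def Yex (ad at' : ℝ) (k : ℂ) : Matrix (Fin 3) (Fin 3) ℂ :=
  !![Complex.I * k * Complex.exp (Complex.I * k * (ad : ℂ)),
       -(Complex.I * k) * Complex.exp (-(Complex.I * k * (ad : ℂ))), 0;
     -(Complex.I * k), Complex.I * k, 0;
     0, 0, (1 - Complex.exp (k ^ 2 * (at' : ℂ))) / (Real.sqrt 2 : ℂ)]

-- `P` projects onto the span of `(1,0,0)` and `(0,1,1)`, and `1 - P` onto that of `(0,1,-1)`; the
-- left factor has these vectors, up to scale, as columns.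
theorem Pex_mul_add_one_sub_Pex_mul (X Y : Matrix (Fin 3) (Fin 3) ℂ) :
    Pex * X + (1 - Pex) * Y =
      !![1, 0, 0; 0, 1/2, 1/2; 0, 1/2, -1/2] * Matrix.of ![X 0, X 1 + X 2, Y 1 - Y 2] := by
  ext i j
  simp only [Matrix.add_apply, Matrix.sub_apply, Matrix.mul_apply, Matrix.one_apply,
    Fin.sum_univ_three, Pex]
  fin_cases i <;> simp <;> ring

theorem det_Pex_mul_add_one_sub_Pex_mul (X Y : Matrix (Fin 3) (Fin 3) ℂ) :
    (Pex * X + (1 - Pex) * Y).det =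
      -(1/2) * (Matrix.of ![X 0, X 1 + X 2, Y 1 - Y 2]).det := by
  have det_left : (!![1, 0, 0; 0, 1/2, 1/2; 0, 1/2, -1/2] : Matrix (Fin 3) (Fin 3) ℂ).det =
      -(1/2) := by
    simp only [Matrix.det_fin_three, Matrix.of_apply, Matrix.cons_val]
    norm_num
  rw [Pex_mul_add_one_sub_Pex_mul, Matrix.det_mul, det_left]

theorem det_fin_three_of_zero_upper_right {R : Type*} [CommRing R] (a b p q s u v t : R) :
    !![a, b, 0; p, q, s; u, v, t].det =
      t * !![a, b; p, q].det - s * !![a, b; u, v].det := by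
  simp only [Matrix.det_fin_two_of, Matrix.det_fin_three, Matrix.of_apply, Matrix.cons_val]
  ring

theorem det_Pex_mul_add_one_sub_Pex_mul_of_blocks (a b p q s a' b' p' q' s' : ℂ) :
    (Pex * !![a, b, 0; p, q, 0; 0, 0, s] +
        (1 - Pex) * !![a', b', 0; p', q', 0; 0, 0, s']).det =
      (s' * !![a, b; p, q].det + s * !![a, b; p', q'].det) / 2 := by
  calc
    _ = -(1/2) * !![a, b, 0; p, q, s; p', q', -s'].det := by
      rw [det_Pex_mul_add_one_sub_Pex_mul]
      congr 2
      ext i j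
      fin_cases i <;> fin_cases j <;> simp
    _ = _ := by
      rw [det_fin_three_of_zero_upper_right]
      ring

-- The values of `e^{ikx}` and `e^{-ikx}` at the two ends of the diffusion edge, with `z = k a_d`.
theorem det_exp_dirichlet (z : ℂ) :
    !![cexp (I * z), cexp (-(I * z)); 1, 1].det = 2 * I * sin z := by
  rw [Matrix.det_fin_two_of, mul_comm I z, ← neg_mul]
  linear_combination -I * two_sin z - (cexp (-z * I) - cexp (z * I)) * I_mul_I

-- Values at one end of the diffusion edge and, for `w = ik`, outward derivatives at the other.
theorem det_exp_dirichlet_neumann (z w : ℂ) :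
    !![cexp (I * z), cexp (-(I * z)); -w, w].det = 2 * w * cos z := by
  rw [Matrix.det_fin_two_of, mul_comm I z, ← neg_mul]
  linear_combination -w * two_cos z

/-- the secular determinant for the graph with one diffusion edge of length
`a_d` and one transport edge of length `a_t`, with `L = 0`:
`det(P X(k) + (I−P) Y(k)) = (i/√2)[sin(k a_d)(1 − e^{k² a_t}) + k cos(k a_d)(1 + e^{k² a_t})]`. -/
theorem stmt_13 (ad at' : ℝ) (k : ℂ) :
    (Pex * Xex ad at' k + (1 - Pex) * Yex ad at' k).det =
      Complex.I / (Real.sqrt 2 : ℂ) *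
        (Complex.sin (k * (ad : ℂ)) * (1 - Complex.exp (k ^ 2 * (at' : ℂ))) +
          k * Complex.cos (k * (ad : ℂ)) * (1 + Complex.exp (k ^ 2 * (at' : ℂ)))) := by
  simp only [Xex, Yex, mul_assoc I k]
  rw [det_Pex_mul_add_one_sub_Pex_mul_of_blocks, det_exp_dirichlet, det_exp_dirichlet_neumann]
  ring
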